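/- Let d ≥ 1 be an integer, δ ∈ (0, 1], γ > 0, and σ a real number. Suppose k₁, k₂ are natural numbers such that (1 − δ)^{(p_d)^{k₁}} ≤ γ and (2γ)^{(d+1)^{k₂}} ≤ 2^{1−σ}. Then for every real m with δ ≤ |m| ≤ 1, |g_d^{(k₁+k₂)}(m) − sgn(m)| ≤ 2^{−σ}. -/

import Mathlib

noncomputable def g (d : ℕ) : ℝ → ℝ :=
  fun m => ∑ i ∈ Finset.range (d + 1),
    (1 / 4 ^ i : ℝ) * (Nat.choose (2 * i) i) * (m * (1 - m ^ 2) ^ i)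

noncomputable def p (d : ℕ) : ℝ :=
  ∑ i ∈ Finset.range (d + 1), (1 / 4 ^ i : ℝ) * (Nat.choose (2 * i) i)

noncomputable def sgn (m : ℝ) : ℝ :=
  if m > 0 then 1 else if m = 0 then 0 else -1

lemma aux_cb (d : ℕ) : p d = (2 * d + 1) * ((1 / 4 ^ d : ℝ) * (Nat.choose (2 * d) d)) := by
  induction d with
  | zero => simp [p]
  | succ n ih =>
    have h : p (n + 1) = p n + (1 / 4 ^ (n + 1) : ℝ) * (Nat.choose (2 * (n + 1)) (n + 1)) := by
      unfold p
      rw [Finset.sum_range_succ _ (n + 1)]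
    rw [h, ih]
    have h2 := Nat.succ_mul_centralBinom_succ n
    unfold Nat.centralBinom at h2
    have h3 : ((n : ℝ) + 1) * (Nat.choose (2 * (n + 1)) (n + 1) : ℝ)
        = 2 * (2 * n + 1) * (Nat.choose (2 * n) n : ℝ) := by exact_mod_cast h2
    push_cast
    rw [pow_succ]
    field_simp
    linarith

lemma aux_p_succ (d : ℕ) :
    p d = (2 * d + 2) * ((1 / 4 ^ (d + 1) : ℝ) * (Nat.choose (2 * (d + 1)) (d + 1))) := by
  have h : p (d + 1) = p d + (1 / 4 ^ (d + 1) : ℝ) * (Nat.choose (2 * (d + 1)) (d + 1)) := by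
    unfold p
    rw [Finset.sum_range_succ _ (d + 1)]
  have h2 := aux_cb (d + 1)
  push_cast at h2
  linarith

lemma aux_p_one (d : ℕ) : 1 ≤ p d := by
  unfold p
  rw [Finset.sum_range_succ']
  have : 0 ≤ ∑ i ∈ Finset.range d, (1 / 4 ^ (i + 1) : ℝ) * (Nat.choose (2 * (i + 1)) (i + 1)) :=
    Finset.sum_nonneg fun i _ => by positivity
  simpa using this

lemma aux_p_le (d : ℕ) : p d ≤ d + 1 := by
  unfold p
  have : ∑ i ∈ Finset.range (d + 1), (1 / 4 ^ i : ℝ) * (Nat.choose (2 * i) i)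
      ≤ ∑ i ∈ Finset.range (d + 1), (1 : ℝ) := by
    apply Finset.sum_le_sum
    intro i _
    have h : Nat.choose (2 * i) i ≤ 4 ^ i := by
      have := Nat.choose_le_two_pow (2 * i) i
      rwa [pow_mul] at this
    have h' : (Nat.choose (2 * i) i : ℝ) ≤ 4 ^ i := by exact_mod_cast h
    rw [one_div, inv_mul_le_iff₀ (by positivity)]
    linarith
  simpa using this

lemma aux_deriv (d : ℕ) (m : ℝ) : HasDerivAt (g d) (p d * (1 - m ^ 2) ^ d) m := by
  induction d with
  | zero =>
    have : g 0 = fun m => m := by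
      funext m
      simp [g]
    rw [this]
    simpa [p] using hasDerivAt_id' m
  | succ n ih =>
    have h : g (n + 1) = fun m => g n m + (1 / 4 ^ (n + 1) : ℝ) *
        (Nat.choose (2 * (n + 1)) (n + 1)) * (m * (1 - m ^ 2) ^ (n + 1)) := by
      funext m
      unfold g
      rw [Finset.sum_range_succ _ (n + 1)]
    have h2 : HasDerivAt (fun m : ℝ => 1 - m ^ 2) (-(2 * m)) m := by
      simpa using (hasDerivAt_pow 2 m).const_sub 1
    have h3 := ih.add (((hasDerivAt_id' m).mul (h2.pow (n + 1))).const_mul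
      ((1 / 4 ^ (n + 1) : ℝ) * (Nat.choose (2 * (n + 1)) (n + 1))))
    rw [h]
    have e1 := aux_p_succ n
    have e2 := aux_cb (n + 1)
    refine h3.congr_deriv ?_
    rw [e1, e2]
    generalize (1 / 4 ^ (n + 1) : ℝ) * (Nat.choose (2 * (n + 1)) (n + 1)) = a
    simp
    ring

lemma aux_g_zero (d : ℕ) : g d 0 = 0 := by simp [g]

lemma aux_g_one (d : ℕ) : g d 1 = 1 := by
  unfold g
  rw [Finset.sum_range_succ']
  simp

lemma aux_g_neg (d : ℕ) (m : ℝ) : g d (-m) = -g d m := by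
  unfold g
  rw [← Finset.sum_neg_distrib]
  refine Finset.sum_congr rfl fun i _ => ?_
  rw [neg_sq]
  ring

lemma aux_cont (d : ℕ) : Continuous (g d) := by
  unfold g
  fun_prop

lemma aux_g_mono (d : ℕ) : MonotoneOn (g d) (Set.Icc 0 1) := by
  apply monotoneOn_of_hasDerivWithinAt_nonneg (convex_Icc 0 1) (aux_cont d).continuousOn
    (fun x _ => (aux_deriv d x).hasDerivWithinAt)
  intro x hx
  rw [interior_Icc] at hx
  have := aux_p_one d
  have : 0 ≤ 1 - x ^ 2 := by nlinarith [hx.1, hx.2]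
  positivity

lemma aux_g_mem (d : ℕ) {x : ℝ} (hx : x ∈ Set.Icc (0 : ℝ) 1) : g d x ∈ Set.Icc (0 : ℝ) 1 := by
  have h0 := aux_g_mono d (Set.left_mem_Icc.2 zero_le_one) hx hx.1
  have h1 := aux_g_mono d hx (Set.right_mem_Icc.2 zero_le_one) hx.2
  rw [aux_g_zero] at h0
  rw [aux_g_one] at h1
  exact ⟨h0, h1⟩

lemma aux_B (d : ℕ) {x : ℝ} (hx : x ∈ Set.Icc (0 : ℝ) 1) :
    1 - g d x ≤ 2 ^ d * (1 - x) ^ (d + 1) := by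
  have hd : ∀ y, HasDerivAt (fun y : ℝ => 2 ^ d * (1 - y) ^ (d + 1) - (1 - g d y))
      ((1 - y) ^ d * (p d * (1 + y) ^ d - (d + 1) * 2 ^ d)) y := by
    intro y
    have h1 : HasDerivAt (fun y : ℝ => 1 - y) (-1) y := by
      simpa using (hasDerivAt_id' y).const_sub 1
    refine (((h1.pow (d + 1)).const_mul (2 ^ d)).sub ((aux_deriv d y).const_sub 1)).congr_deriv ?_
    rw [show 1 - y ^ 2 = (1 - y) * (1 + y) by ring, mul_pow]
    simp
    ring
  have hanti : AntitoneOn (fun y : ℝ => 2 ^ d * (1 - y) ^ (d + 1) - (1 - g d y)) (Set.Icc 0 1) := by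
    apply antitoneOn_of_hasDerivWithinAt_nonpos (convex_Icc 0 1)
      (fun y _ => (hd y).continuousAt.continuousWithinAt)
      (fun y _ => (hd y).hasDerivWithinAt)
    intro y hy
    rw [interior_Icc] at hy
    have h1 : (0 : ℝ) ≤ (1 - y) ^ d := pow_nonneg (by linarith [hy.2]) _
    have h2 : (1 + y) ^ d ≤ (2 : ℝ) ^ d :=
      pow_le_pow_left₀ (by linarith [hy.1]) (by linarith [hy.2]) _
    have h3 := aux_p_le d
    have h4 := aux_p_one d
    have h5 : p d * (1 + y) ^ d ≤ (d + 1) * 2 ^ d :=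
      mul_le_mul h3 h2 (pow_nonneg (by linarith [hy.1]) _) (by positivity)
    exact mul_nonpos_of_nonneg_of_nonpos h1 (by linarith)
  have := hanti hx (Set.right_mem_Icc.2 zero_le_one) hx.2
  simp [aux_g_one] at this
  linarith

lemma aux_D (d : ℕ) (hd1 : 1 ≤ d) {x : ℝ} (hx : x ∈ Set.Icc (0 : ℝ) 1) :
    1 - g d x ≤ (1 - x) * (1 - x ^ 2) ^ d := by
  obtain ⟨n, rfl⟩ : ∃ n, d = n + 1 := ⟨d - 1, by omega⟩
  set f : ℝ → ℝ := fun y => (1 - y) * (1 - y ^ 2) ^ (n + 1) - (1 - g (n + 1) y) with hf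
  set P := p (n + 1) with hP
  have hd : ∀ y, HasDerivAt f
      ((1 - y ^ 2) ^ n * (1 - y) * ((P - 1) * (1 + y) - 2 * (n + 1) * y)) y := by
    intro y
    have h1 : HasDerivAt (fun y : ℝ => 1 - y) (-1) y := by
      simpa using (hasDerivAt_id' y).const_sub 1
    have h2 : HasDerivAt (fun m : ℝ => 1 - m ^ 2) (-(2 * y)) y := by
      simpa using (hasDerivAt_pow 2 y).const_sub 1
    refine ((h1.mul (h2.pow (n + 1))).sub ((aux_deriv (n + 1) y).const_sub 1)).congr_deriv ?_
    rw [← hP]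
    simp
    ring
  have hp1 := aux_p_one (n + 1)
  have hp2 := aux_p_le (n + 1)
  rw [← hP] at hp1 hp2
  push_cast at hp2
  have hn : (0 : ℝ) ≤ n := n.cast_nonneg
  have hw : ∀ y : ℝ, 0 ≤ y → y ≤ 1 → 0 ≤ (1 - y ^ 2) ^ n * (1 - y) := fun y h0 h1 =>
    mul_nonneg (pow_nonneg (by nlinarith) _) (by linarith)
  suffices 0 ≤ f x by
    simp only [hf] at this
    linarith
  rcases le_total 0 ((P - 1) * (1 + x) - 2 * (n + 1) * x) with hb | hb
  · have hm : MonotoneOn f (Set.Icc 0 x) := by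
      apply monotoneOn_of_hasDerivWithinAt_nonneg (convex_Icc 0 x)
        (fun y _ => (hd y).continuousAt.continuousWithinAt)
        (fun y _ => (hd y).hasDerivWithinAt)
      intro y hy
      rw [interior_Icc] at hy
      refine mul_nonneg (hw y hy.1.le (hy.2.le.trans hx.2)) ?_
      nlinarith [hy.1, hy.2, mul_nonneg (sub_nonneg.2 hy.2.le) (by linarith : 0 ≤ 2 * (n + 1) - (P - 1))]
    have := hm (Set.left_mem_Icc.2 hx.1) (Set.right_mem_Icc.2 hx.1) hx.1
    simpa [hf, aux_g_zero] using this
  · have hm : AntitoneOn f (Set.Icc x 1) := by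
      apply antitoneOn_of_hasDerivWithinAt_nonpos (convex_Icc x 1)
        (fun y _ => (hd y).continuousAt.continuousWithinAt)
        (fun y _ => (hd y).hasDerivWithinAt)
      intro y hy
      rw [interior_Icc] at hy
      refine mul_nonpos_of_nonneg_of_nonpos (hw y (hx.1.trans hy.1.le) hy.2.le) ?_
      nlinarith [hy.1, hy.2, mul_nonneg (sub_nonneg.2 hy.1.le) (by linarith : 0 ≤ 2 * (n + 1) - (P - 1))]
    have := hm (Set.left_mem_Icc.2 hx.2) (Set.right_mem_Icc.2 hx.2) hx.2
    simpa [hf, aux_g_one] using this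

lemma aux_A (d : ℕ) (hd1 : 1 ≤ d) {x : ℝ} (hx : x ∈ Set.Icc (0 : ℝ) 1) :
    1 - g d x ≤ (1 - x) ^ (p d) := by
  have hp1 := aux_p_one d
  rcases hx.2.eq_or_lt with rfl | hx1
  · rw [aux_g_one, sub_self, Real.zero_rpow (by linarith)]
  have hd : ∀ y, y < 1 → HasDerivAt (fun y : ℝ => (1 - g d y) * (1 - y) ^ (-p d))
      ((1 - y) ^ (-p d - 1) * p d * ((1 - g d y) - (1 - y) * (1 - y ^ 2) ^ d)) y := by
    intro y hy
    have h1 : HasDerivAt (fun y : ℝ => 1 - y) (-1) y := by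
      simpa using (hasDerivAt_id' y).const_sub 1
    have h2 := h1.rpow_const (p := -p d) (Or.inl (by linarith))
    refine (((aux_deriv d y).const_sub 1).mul h2).congr_deriv ?_
    have : (1 - y) ^ (-p d) = (1 - y) ^ (-p d - 1) * (1 - y) := by
      rw [Real.rpow_sub_one (by linarith)]
      field_simp [(by linarith : (1 - y) ≠ 0)]
    rw [this]
    ring
  have hanti : AntitoneOn (fun y : ℝ => (1 - g d y) * (1 - y) ^ (-p d)) (Set.Icc 0 x) := by
    apply antitoneOn_of_hasDerivWithinAt_nonpos (convex_Icc 0 x)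
      (fun y hy => (hd y (hy.2.trans_lt hx1)).continuousAt.continuousWithinAt)
      (fun y hy => (hd y ((interior_subset hy).2.trans_lt hx1)).hasDerivWithinAt)
    intro y hy
    have hy := interior_subset hy
    have hD := aux_D d hd1 (x := y) ⟨hy.1, hy.2.trans hx1.le⟩
    have hy1 : 0 ≤ 1 - y := by linarith [hy.2]
    exact mul_nonpos_of_nonneg_of_nonpos
      (mul_nonneg (Real.rpow_nonneg hy1 _) (by linarith)) (by linarith)
  have := hanti (Set.left_mem_Icc.2 hx.1) (Set.right_mem_Icc.2 hx.1) hx.1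
  simp only [aux_g_zero, sub_zero, Real.one_rpow, mul_one] at this
  rw [Real.rpow_neg (by linarith), ← div_eq_mul_inv,
    div_le_one (Real.rpow_pos_of_pos (by linarith) _)] at this
  exact this

lemma aux_iter_mem (d k : ℕ) {x : ℝ} (hx : x ∈ Set.Icc (0 : ℝ) 1) :
    (g d)^[k] x ∈ Set.Icc (0 : ℝ) 1 := by
  induction k with
  | zero => simpa using hx
  | succ k ih =>
    rw [Function.iterate_succ_apply']
    exact aux_g_mem d ih

lemma aux_iter_A (d : ℕ) (hd1 : 1 ≤ d) (k : ℕ) {x : ℝ} (hx : x ∈ Set.Icc (0 : ℝ) 1) :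
    1 - (g d)^[k] x ≤ (1 - x) ^ (p d ^ k) := by
  induction k with
  | zero => simp
  | succ k ih =>
    rw [Function.iterate_succ_apply']
    have hm := aux_iter_mem d k hx
    have hp1 := aux_p_one d
    refine (aux_A d hd1 hm).trans ?_
    rw [pow_succ, Real.rpow_mul (by linarith [hx.2])]
    exact Real.rpow_le_rpow (by linarith [hm.2]) ih (by linarith)

lemma aux_iter_B (d k : ℕ) {x : ℝ} (hx : x ∈ Set.Icc (0 : ℝ) 1) :
    2 * (1 - (g d)^[k] x) ≤ (2 * (1 - x)) ^ ((d + 1) ^ k) := by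
  induction k with
  | zero => simp
  | succ k ih =>
    rw [Function.iterate_succ_apply']
    have hm := aux_iter_mem d k hx
    have hB := aux_B d hm
    have h2 := pow_le_pow_left₀ (by linarith [hm.2]) ih (d + 1)
    rw [← pow_mul, ← pow_succ, mul_pow, pow_succ 2 d] at h2
    linarith

lemma aux_iter_neg (d k : ℕ) (x : ℝ) : (g d)^[k] (-x) = -(g d)^[k] x := by
  induction k with
  | zero => simp
  | succ k ih => rw [Function.iterate_succ_apply', Function.iterate_succ_apply', ih, aux_g_neg]

theorem stmt_8 (d : ℕ) (hd : 1 ≤ d) (δ γ σ : ℝ) (hδ0 : 0 < δ) (hδ1 : δ ≤ 1)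
    (hγ : 0 < γ) (k₁ k₂ : ℕ)
    (h1 : (1 - δ) ^ (p d ^ k₁) ≤ γ)
    (h2 : (2 * γ) ^ ((d + 1) ^ k₂) ≤ (2 : ℝ) ^ (1 - σ))
    (m : ℝ) (hm : δ ≤ |m|) (hm1 : |m| ≤ 1) :
    |(g d)^[k₁ + k₂] m - sgn m| ≤ (2 : ℝ) ^ (-σ) := by
  have key : ∀ x : ℝ, δ ≤ x → x ≤ 1 → |(g d)^[k₁ + k₂] x - 1| ≤ (2 : ℝ) ^ (-σ) := by
    intro x hx0 hx1
    have hx : x ∈ Set.Icc (0 : ℝ) 1 := ⟨by linarith, hx1⟩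
    have hm1 := aux_iter_mem d k₁ hx
    have hm2 := aux_iter_mem d (k₁ + k₂) hx
    have hA : 1 - (g d)^[k₁] x ≤ γ := by
      refine (aux_iter_A d hd k₁ hx).trans (le_trans ?_ h1)
      have hp1 := aux_p_one d
      exact Real.rpow_le_rpow (by linarith) (by linarith) (by positivity)
    have hB := aux_iter_B d k₂ hm1
    rw [← Function.iterate_add_apply, add_comm k₂ k₁] at hB
    have h3 := pow_le_pow_left₀ (by linarith [hm1.2] : 0 ≤ 2 * (1 - (g d)^[k₁] x))
      (by linarith : 2 * (1 - (g d)^[k₁] x) ≤ 2 * γ) ((d + 1) ^ k₂)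
    have h4 : (2 : ℝ) ^ (1 - σ) = 2 * 2 ^ (-σ) := by
      rw [sub_eq_add_neg, Real.rpow_add (by norm_num), Real.rpow_one]
    rw [abs_sub_comm, abs_of_nonneg (by linarith [hm2.2])]
    linarith
  rcases lt_trichotomy m 0 with h | h | h
  · rw [abs_of_neg h] at hm hm1
    have := key (-m) hm hm1
    rw [aux_iter_neg, ← abs_neg] at this
    have hs : sgn m = -1 := by
      unfold sgn
      rw [if_neg (by linarith), if_neg h.ne]
    rw [hs]
    convert this using 2
    ring
  · simp [h] at hm
    linarith
  · rw [abs_of_pos h] at hm hm1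
    have hs : sgn m = 1 := by
      unfold sgn
      rw [if_pos h]
    rw [hs]
    exact key m hm hm1
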